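/- arXiv:2603.21161 — 3 statements merged into one kernel-verified Lean document; each statement's English description precedes it below -/
import Mathlib

section
/- The function φ(x) = x·cos(x)/sin(x) is strictly antitone (strictly decreasing) on the open interval (0, π). -/
open Real Set

theorem sin_mul_cos_lt_self {x : ℝ} (hx : 0 < x) : sin x * cos x < x := by
  have double_angle_lt : 2 * sin x * cos x < 2 * x := by
    rw [← sin_two_mul]
    exact sin_lt (by positivity)
  linarith

theorem hasDerivAt_mul_cos_div_sin {x : ℝ} (hx : sin x ≠ 0) :
    HasDerivAt (fun y ↦ y * cos y / sin y) ((sin x * cos x - x) / sin x ^ 2) x := by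
  have quotient_rule := ((hasDerivAt_id' x).fun_mul (hasDerivAt_cos x)).fun_div
    (hasDerivAt_sin x) hx
  refine quotient_rule.congr_deriv ?_
  congr 1
  linear_combination -x * sin_sq_add_cos_sq x

theorem strictAntiOn_x_mul_cot_general {s : Set ℝ} (hs : Convex ℝ s)
    (hpos : ∀ x ∈ s, 0 < x) (hsin : ∀ x ∈ s, sin x ≠ 0) :
    StrictAntiOn (fun x ↦ x * cos x / sin x) s := by
  refine strictAntiOn_of_hasDerivWithinAt_neg hs
    (fun x hx ↦ (hasDerivAt_mul_cos_div_sin (hsin x hx)).continuousAt.continuousWithinAt)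
    (fun x hx ↦
      (hasDerivAt_mul_cos_div_sin (hsin x (interior_subset hx))).hasDerivWithinAt)
    fun x hx ↦ ?_
  have hxs : x ∈ s := interior_subset hx
  exact div_neg_of_neg_of_pos (sub_neg.2 (sin_mul_cos_lt_self (hpos x hxs)))
    (sq_pos_of_ne_zero (hsin x hxs))

theorem strictAntiOn_x_mul_cot :
    StrictAntiOn (fun x : ℝ => x * Real.cos x / Real.sin x) (Set.Ioo 0 Real.pi) :=
  strictAntiOn_x_mul_cot_general (convex_Ioo 0 π) (fun _ hx ↦ hx.1)
    fun _ hx ↦ (sin_pos_of_mem_Ioo hx).ne'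
end

section
/- For every natural number N ≥ 2, the function u ↦ sin(N·u/2)/sin(u/2) is strictly antitone (strictly decreasing) on the half-open interval (0, 2π/N]. -/
open Real Set

/-!
The derivative of `sin (a x) / sin (b x)` has the sign of the Wronskian
`W x = a cos (a x) sin (b x) - b sin (a x) cos (b x)`. As in Sturm's comparison argument,
`W' = (b² - a²) sin (a x) sin (b x)` is negative on `(0, π / a)` when `0 < b < a`, and `W 0 = 0`.
Hence `W`, and with it the derivative of the quotient, is negative on `(0, π / a)`. The
Dirichlet kernel is the case `a = N / 2`, `b = 1 / 2`.
-/

theorem hasDerivAt_sin_mul (a x : ℝ) : HasDerivAt (fun x => sin (a * x)) (a * cos (a * x)) x := by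
  simpa only [mul_one, mul_comm] using ((hasDerivAt_id' x).const_mul a).sin

theorem hasDerivAt_cos_mul (a x : ℝ) :
    HasDerivAt (fun x => cos (a * x)) (-(a * sin (a * x))) x := by
  simpa only [mul_one, mul_comm, mul_neg] using ((hasDerivAt_id' x).const_mul a).cos

theorem hasDerivAt_wronskian_sin_mul (a b x : ℝ) :
    HasDerivAt (fun x => a * cos (a * x) * sin (b * x) - sin (a * x) * (b * cos (b * x)))
      ((b ^ 2 - a ^ 2) * (sin (a * x) * sin (b * x))) x := by
  refine ((((hasDerivAt_cos_mul a x).const_mul a).mul (hasDerivAt_sin_mul b x)).sub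
    ((hasDerivAt_sin_mul a x).mul ((hasDerivAt_cos_mul b x).const_mul b))).congr_deriv ?_
  ring

theorem hasDerivAt_sin_mul_div_sin_mul {a b x : ℝ} (hx : sin (b * x) ≠ 0) :
    HasDerivAt (fun x => sin (a * x) / sin (b * x))
      ((a * cos (a * x) * sin (b * x) - sin (a * x) * (b * cos (b * x))) / sin (b * x) ^ 2) x :=
  (hasDerivAt_sin_mul a x).div (hasDerivAt_sin_mul b x) hx

theorem sin_mul_pos_of_mem_Ioo {a x : ℝ} (ha : 0 < a) (hx : x ∈ Ioo 0 (π / a)) :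
    0 < sin (a * x) :=
  sin_pos_of_pos_of_lt_pi (mul_pos ha hx.1) ((lt_div_iff₀' ha).1 hx.2)

theorem sin_mul_pos_of_mem_Ioc_of_lt {a b x : ℝ} (hb : 0 < b) (hba : b < a)
    (hx : x ∈ Ioc 0 (π / a)) : 0 < sin (b * x) :=
  sin_mul_pos_of_mem_Ioo hb ⟨hx.1, hx.2.trans_lt (div_lt_div_of_pos_left pi_pos hb hba)⟩

theorem strictAntiOn_wronskian_sin_mul {a b : ℝ} (hb : 0 < b) (hba : b < a) :
    StrictAntiOn (fun x => a * cos (a * x) * sin (b * x) - sin (a * x) * (b * cos (b * x)))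
      (Icc 0 (π / a)) := by
  refine strictAntiOn_of_deriv_neg (convex_Icc _ _) (by fun_prop) fun x hx => ?_
  rw [interior_Icc] at hx
  rw [(hasDerivAt_wronskian_sin_mul a b x).deriv]
  have sq_sub_neg : b ^ 2 - a ^ 2 < 0 := sub_neg.2 (pow_lt_pow_left₀ hba hb.le two_ne_zero)
  exact mul_neg_of_neg_of_pos sq_sub_neg <| mul_pos
    (sin_mul_pos_of_mem_Ioo (hb.trans hba) hx)
    (sin_mul_pos_of_mem_Ioc_of_lt hb hba (Ioo_subset_Ioc_self hx))

theorem wronskian_sin_mul_neg {a b x : ℝ} (hb : 0 < b) (hba : b < a) (hx : x ∈ Ioc 0 (π / a)) :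
    a * cos (a * x) * sin (b * x) - sin (a * x) * (b * cos (b * x)) < 0 := by
  have zero_mem : (0 : ℝ) ∈ Icc 0 (π / a) := left_mem_Icc.2 (hx.1.le.trans hx.2)
  simpa using
    strictAntiOn_wronskian_sin_mul hb hba zero_mem (Ioc_subset_Icc_self hx) hx.1

theorem strictAntiOn_dirichlet_kernel_general {a b : ℝ} (hb : 0 < b) (hba : b < a) :
    StrictAntiOn (fun x => sin (a * x) / sin (b * x)) (Ioc 0 (π / a)) := by
  have sin_pos : ∀ x ∈ Ioc 0 (π / a), 0 < sin (b * x) :=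
    fun _ => sin_mul_pos_of_mem_Ioc_of_lt hb hba
  refine strictAntiOn_of_deriv_neg (convex_Ioc _ _) (fun x hx =>
    (hasDerivAt_sin_mul_div_sin_mul (sin_pos x hx).ne').continuousAt.continuousWithinAt)
    fun x hx => ?_
  replace hx : x ∈ Ioc 0 (π / a) := interior_subset hx
  rw [(hasDerivAt_sin_mul_div_sin_mul (sin_pos x hx).ne').deriv]
  exact div_neg_of_neg_of_pos (wronskian_sin_mul_neg hb hba hx) (pow_pos (sin_pos x hx) 2)

theorem strictAntiOn_dirichlet_kernel (N : ℕ) (hN : 2 ≤ N) :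
    StrictAntiOn (fun u : ℝ => Real.sin (N * u / 2) / Real.sin (u / 2))
      (Set.Ioc 0 (2 * Real.pi / N)) := by
  have half_lt : (1 / 2 : ℝ) < N / 2 := by gcongr; exact_mod_cast hN
  convert strictAntiOn_dirichlet_kernel_general one_half_pos half_lt using 2
  · ring_nf
  · field_simp
end

section
/- Let δ be a real number with 0 < δ < 2π and 2π·sin(δ/2) > δ. Then there exists N₀ ∈ ℕ such that for all N ≥ N₀ and all real u with δ/N ≤ u ≤ 2π − δ/N, one has ‖S_N(u)‖ ≤ sin(δ/2)/sin(δ/(2N)). -/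
open Complex Real Finset

/-- The exponential sum `S_N(u) = Σ_{t=1}^{N} exp(I·t·u)`. -/
noncomputable def expSum (N : ℕ) (u : ℝ) : ℂ :=
  ∑ t ∈ Finset.Icc 1 N, Complex.exp (Complex.I * t * u)

/-!
The sum is geometric, so `‖S_N(u)‖ = |sin (N x)| / |sin x|` with `x = u / 2`, and `u ↦ 2π - u`
reduces the claim to `a ≤ x ≤ π / 2`, where `a = δ / (2 N)`. On `(0, π / N]` the quotient
`sin (N x) / sin x` is decreasing, hence at most its value at `a`. Beyond `π / N` it is at most
`1 / sin (π / N)`, which is asymptotically `N / π`, whereas the claimed bound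
`sin (δ / 2) / sin (δ / (2 N))` is asymptotically `2 N sin (δ / 2) / δ`; the assumption
`δ < 2 π sin (δ / 2)` says precisely that the latter is larger.
-/

open Filter Topology

theorem expSum_eq_exp_mul_geom_sum (N : ℕ) (u : ℝ) :
    expSum N u = Complex.exp (I * u) * ∑ t ∈ range N, Complex.exp (I * u) ^ t := by
  rw [expSum, ← Ico_add_one_right_eq_Icc, sum_Ico_eq_sum_range, Nat.add_sub_cancel, mul_sum]
  refine sum_congr rfl fun t _ ↦ ?_
  rw [← pow_succ', ← Complex.exp_nat_mul]
  push_cast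
  ring_nf

theorem norm_expSum_mul_abs_sin (N : ℕ) (u : ℝ) :
    ‖expSum N u‖ * |Real.sin (u / 2)| = |Real.sin (N * (u / 2))| := by
  have norm_exp_sub_one (v : ℝ) : ‖Complex.exp (I * v) - 1‖ = 2 * |Real.sin (v / 2)| := by
    rw [norm_exp_I_mul_ofReal_sub_one, norm_mul, Real.norm_two, Real.norm_eq_abs]
  have exp_pow : Complex.exp (I * u) ^ N = Complex.exp (I * (N * u : ℝ)) := by
    rw [← Complex.exp_nat_mul]
    push_cast
    ring_nf
  have norm_geom_sum := congrArg norm (geom_sum_mul (Complex.exp (I * u)) N)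
  rw [norm_mul, exp_pow, norm_exp_sub_one, norm_exp_sub_one, mul_div_assoc] at norm_geom_sum
  rw [expSum_eq_exp_mul_geom_sum, norm_mul, norm_exp_I_mul_ofReal, one_mul]
  linarith

theorem sin_nat_mul_mul_sin_le {a x : ℝ} {n : ℕ} (ha : 0 ≤ a) (hax : a ≤ x) (hn : n * x ≤ π) :
    Real.sin (n * x) * Real.sin a ≤ Real.sin (n * a) * Real.sin x := by
  induction n with
  | zero => simp
  | succ n ih =>
    rcases Nat.eq_zero_or_pos n with rfl | hpos
    · simp [mul_comm]
    have one_le_n : (1 : ℝ) ≤ n := mod_cast hpos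
    push_cast at hn ⊢
    have hnx : n * x ≤ π := by nlinarith
    have hx : x ≤ π / 2 := by nlinarith
    have hna : n * a ≤ n * x := by gcongr
    have sin_a_nonneg : 0 ≤ Real.sin a := sin_nonneg_of_nonneg_of_le_pi ha (by linarith)
    have sin_x_nonneg : 0 ≤ Real.sin x :=
      sin_nonneg_of_nonneg_of_le_pi (ha.trans hax) (by linarith)
    have sin_na_nonneg : 0 ≤ Real.sin (n * a) :=
      sin_nonneg_of_nonneg_of_le_pi (by positivity) (by linarith)
    have cos_x_nonneg : 0 ≤ Real.cos x := cos_nonneg_of_neg_pi_div_two_le_of_le (by linarith) hx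
    have cos_le : Real.cos x ≤ Real.cos a := cos_le_cos_of_nonneg_of_le_pi ha (by linarith) hax
    have cos_n_mul_le : Real.cos (n * x) ≤ Real.cos (n * a) :=
      cos_le_cos_of_nonneg_of_le_pi (by positivity) hnx hna
    calc Real.sin ((n + 1) * x) * Real.sin a
        = Real.sin (n * x) * Real.sin a * Real.cos x
          + Real.cos (n * x) * (Real.sin x * Real.sin a) := by
          rw [add_one_mul, Real.sin_add]; ring
      _ ≤ Real.sin (n * a) * Real.sin x * Real.cos x
          + Real.cos (n * a) * (Real.sin x * Real.sin a) := by
          gcongr ?_ * _ + ?_ * _; exact ih hnx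
      _ ≤ Real.sin (n * a) * Real.sin x * Real.cos a
          + Real.cos (n * a) * (Real.sin x * Real.sin a) := by gcongr
      _ = Real.sin ((n + 1) * a) * Real.sin x := by
          rw [add_one_mul, Real.sin_add]; ring

theorem abs_sin_nat_mul_mul_sin_le_of_le_pi_div_two {a x : ℝ} {n : ℕ} (ha : 0 < a)
    (hn : Real.sin a ≤ Real.sin (n * a) * Real.sin (π / n)) (hax : a ≤ x) (hx : x ≤ π / 2) :
    |Real.sin (n * x)| * Real.sin a ≤ Real.sin (n * a) * Real.sin x := by
  have x_pos : 0 < x := ha.trans_le hax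
  rcases le_or_gt (n * x) π with hnx | hnx
  · rw [abs_of_nonneg (sin_nonneg_of_nonneg_of_le_pi (by positivity) hnx)]
    exact sin_nat_mul_mul_sin_le ha.le hax hnx
  · have n_pos : (0 : ℝ) < n := pos_of_mul_pos_left (pi_pos.trans hnx) x_pos.le
    have pi_div_n_le : π / n ≤ x := (div_le_iff₀' n_pos).2 hnx.le
    have pi_div_n_pos : 0 < π / n := by positivity
    have sin_a_pos : 0 < Real.sin a := sin_pos_of_pos_of_lt_pi ha (by linarith [pi_pos])
    have sin_na_pos : 0 < Real.sin (n * a) := pos_of_mul_pos_left (sin_a_pos.trans_le hn)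
      (sin_nonneg_of_nonneg_of_le_pi pi_div_n_pos.le (by linarith [pi_pos]))
    calc |Real.sin (n * x)| * Real.sin a
        ≤ Real.sin a := mul_le_of_le_one_left sin_a_pos.le (abs_sin_le_one _)
      _ ≤ Real.sin (n * a) * Real.sin (π / n) := hn
      _ ≤ Real.sin (n * a) * Real.sin x := by
          gcongr
          exact sin_le_sin_of_le_of_le_pi_div_two (by linarith) hx pi_div_n_le

theorem abs_sin_nat_mul_pi_sub (n : ℕ) (x : ℝ) :
    |Real.sin (n * (π - x))| = |Real.sin (n * x)| := by
  rw [mul_sub, Real.sin_nat_mul_pi_sub, abs_neg, abs_mul, abs_neg_one_pow, one_mul]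

theorem abs_sin_nat_mul_mul_sin_le {a x : ℝ} {n : ℕ} (ha : 0 < a)
    (hn : Real.sin a ≤ Real.sin (n * a) * Real.sin (π / n)) (hax : a ≤ x) (hxa : x ≤ π - a) :
    |Real.sin (n * x)| * Real.sin a ≤ Real.sin (n * a) * Real.sin x := by
  rcases le_total x (π / 2) with hx | hx
  · exact abs_sin_nat_mul_mul_sin_le_of_le_pi_div_two ha hn hax hx
  · rw [← abs_sin_nat_mul_pi_sub, ← Real.sin_pi_sub x]
    exact abs_sin_nat_mul_mul_sin_le_of_le_pi_div_two ha hn (by linarith) (by linarith)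

theorem norm_expSum_le_sin_div_sin {a u : ℝ} {N : ℕ} (ha : 0 < a)
    (hN : Real.sin a ≤ Real.sin (N * a) * Real.sin (π / N))
    (hau : 2 * a ≤ u) (hua : u ≤ 2 * π - 2 * a) :
    ‖expSum N u‖ ≤ Real.sin (N * a) / Real.sin a := by
  have sin_a_pos : 0 < Real.sin a := sin_pos_of_pos_of_lt_pi ha (by linarith)
  have sin_half_pos : 0 < Real.sin (u / 2) :=
    sin_pos_of_pos_of_lt_pi (by linarith) (by linarith)
  have norm_mul_sin := norm_expSum_mul_abs_sin N u
  rw [abs_of_pos sin_half_pos] at norm_mul_sin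
  rw [le_div_iff₀ sin_a_pos]
  refine le_of_mul_le_mul_right ?_ sin_half_pos
  calc ‖expSum N u‖ * Real.sin a * Real.sin (u / 2)
      = |Real.sin (N * (u / 2))| * Real.sin a := by rw [← norm_mul_sin, mul_right_comm]
    _ ≤ Real.sin (N * a) * Real.sin (u / 2) :=
        abs_sin_nat_mul_mul_sin_le ha hN (by linarith) (by linarith)

theorem tendsto_nat_mul_sin_div (x : ℝ) :
    Tendsto (fun n : ℕ ↦ n * Real.sin (x / n)) atTop (𝓝 x) := by
  simpa [div_eq_inv_mul] using (Real.hasDerivAt_sin 0).hasFDerivAt.lim x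
    (tendsto_norm_atTop_atTop.comp tendsto_natCast_atTop_atTop)

theorem eventually_sin_div_le_mul_sin_div {c x y : ℝ} (h : x < c * y) :
    ∀ᶠ n : ℕ in atTop, Real.sin (x / n) ≤ c * Real.sin (y / n) := by
  filter_upwards [(tendsto_nat_mul_sin_div x).eventually_lt
    ((tendsto_nat_mul_sin_div y).const_mul c) h, eventually_gt_atTop 0] with n hlt n_pos
  refine le_of_mul_le_mul_left ?_ (Nat.cast_pos.2 n_pos : (0 : ℝ) < n)
  linarith

theorem norm_expSum_le_of_away_from_zero (δ : ℝ) (hδ0 : 0 < δ)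
    (hδ2π : δ < 2 * Real.pi) (hδsin : δ < 2 * Real.pi * Real.sin (δ / 2)) :
    ∃ N₀ : ℕ, ∀ N : ℕ, N₀ ≤ N → ∀ u : ℝ,
      δ / N ≤ u → u ≤ 2 * Real.pi - δ / N →
      ‖expSum N u‖ ≤ Real.sin (δ / 2) / Real.sin (δ / (2 * N)) := by
  have sin_le : ∀ᶠ N : ℕ in atTop,
      Real.sin (δ / 2 / N) ≤ Real.sin (δ / 2) * Real.sin (π / N) :=
    eventually_sin_div_le_mul_sin_div (by linarith)
  refine eventually_atTop.1 ?_
  filter_upwards [sin_le, eventually_gt_atTop 0] with N hN N_pos u hu hu'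
  have N_mul : N * (δ / (2 * N)) = δ / 2 := by field_simp
  have two_mul_div : 2 * (δ / (2 * N)) = δ / N := by field_simp
  rw [div_div] at hN
  rw [← N_mul] at hN ⊢
  rw [← two_mul_div] at hu hu'
  exact norm_expSum_le_sin_div_sin (by positivity) hN hu hu'
end
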